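/- For every integer n ≥ 2, the uncertainty product of the Abel-Poisson wavelet satisfies lim_{ρ→0+} √(e^{2ρ} A(ρ)²/B(ρ)² - 1) · √(C(ρ)/A(ρ)) = (1/2) √((n+1)(n+2)(n² - 3n + 3) / (n(n-1))). -/

import Mathlib

open Filter

/-- `S n m ρ = Σ_{l=1}^∞ C(l+n-2, l) · l^m · e^{-2ρl}`. -/
noncomputable def S (n : ℕ) (m : ℤ) (ρ : ℝ) : ℝ :=
  ∑' l : ℕ, (Nat.choose (l + 1 + n - 2) (l + 1) : ℝ) * ((l : ℝ) + 1) ^ m *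
    Real.exp (-2 * ρ * ((l : ℝ) + 1))

/-- `A(ρ) = (2/(n-1)) S_{n,2}(ρ) + S_{n,1}(ρ)`. -/
noncomputable def A (n : ℕ) (ρ : ℝ) : ℝ :=
  2 / ((n : ℝ) - 1) * S n 2 ρ + S n 1 ρ

/-- `C(ρ) = (2/(n-1)) S_{n,4}(ρ) + 3 S_{n,3}(ρ) + (n-1) S_{n,2}(ρ)`. -/
noncomputable def Cf (n : ℕ) (ρ : ℝ) : ℝ :=
  2 / ((n : ℝ) - 1) * S n 4 ρ + 3 * S n 3 ρ + ((n : ℝ) - 1) * S n 2 ρ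

/-- `B(ρ) = Σ_{l=1}^∞ (2(l+n-1)/(n-1)) C(l+n-2,l) √(l(l+1)) e^{-2ρl}`. -/
noncomputable def B (n : ℕ) (ρ : ℝ) : ℝ :=
  ∑' l : ℕ, 2 * (((l : ℝ) + 1) + (n : ℝ) - 1) / ((n : ℝ) - 1) *
    (Nat.choose (l + 1 + n - 2) (l + 1) : ℝ) *
    Real.sqrt (((l : ℝ) + 1) * ((l : ℝ) + 2)) * Real.exp (-2 * ρ * ((l : ℝ) + 1))

/-!
Put `q = e^{-2ρ}` and `x = 1 - q`, so that `ρ → 0+` means `x → 0+`. Expanding the coefficients in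
the basis `C(l+m, m)`, whose generating functions are `x^{-(m+1)}`, gives the closed form
`x^{n+1} A = q ((n+1) + (n-1) q)`. In `B`, replacing `√(l(l+1))` by `l + 1/2` costs only `O(1/l)`,
whence `x^{n+1} B = 1 + (2n-1) q + x² R` with `R → -1/(4(n-1))` by an Abelian theorem. The terms of
order `1` and `x` in `q^{-1} A² - B²` cancel, so the space variance is of order `x²`, while the
momentum variance `C / A` is of order `x^{-2}`.
-/

namespace AbelPoisson

open Set Asymptotics Topology
open scoped Nat

section AbelianTheorem

variable {f g : ℕ → ℝ} {L : ℝ}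

/- Each term below a fixed index stays bounded as `q → 1`, and `∑ g l * q ^ l` diverges, so only the
tail, where `f` is small compared with `g`, matters. -/
theorem isLittleO_tsum_mul_pow (hg : ∀ l, 0 ≤ g l)
    (hsum : ∀ᶠ q in 𝓝[<] (1 : ℝ), Summable fun l ↦ g l * q ^ l)
    (htop : Tendsto (fun q : ℝ ↦ ∑' l, g l * q ^ l) (𝓝[<] 1) atTop) (hfg : f =o[atTop] g) :
    (fun q : ℝ ↦ ∑' l, f l * q ^ l) =o[𝓝[<] 1] fun q ↦ ∑' l, g l * q ^ l := by
  refine isLittleO_iff.2 fun c hc ↦ ?_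
  obtain ⟨N, hN⟩ := eventually_atTop.1 (hfg.def (half_pos hc))
  let head : ℕ → ℝ := indicator (Finset.range N) fun l ↦ |f l|
  have hhead : HasSum head (∑ l ∈ Finset.range N, head l) :=
    hasSum_sum_of_ne_finset_zero fun l hl ↦ indicator_of_notMem (mod_cast hl) _
  filter_upwards [hsum, Ioo_mem_nhdsLT one_pos,
    htop.eventually_ge_atTop ((∑ l ∈ Finset.range N, head l) / (c / 2))] with q hgq hq hlarge
  have hterm (l : ℕ) : ‖f l * q ^ l‖ ≤ head l + c / 2 * (g l * q ^ l) := by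
    have hq0 : 0 ≤ q ^ l := pow_nonneg hq.1.le l
    have hgl : 0 ≤ c / 2 * (g l * q ^ l) := by have := hg l; positivity
    rw [norm_mul, Real.norm_eq_abs, Real.norm_of_nonneg hq0]
    by_cases hl : l < N
    · have hhead_l : head l = |f l| := indicator_of_mem (by simpa using hl) _
      have := mul_le_of_le_one_right (abs_nonneg (f l)) (pow_le_one₀ hq.1.le hq.2.le : q ^ l ≤ 1)
      linarith
    · have hhead_l : head l = 0 := indicator_of_notMem (by simpa using hl) _
      have hfl : |f l| ≤ c / 2 * g l := by
        simpa [abs_of_nonneg (hg l)] using hN l (not_lt.1 hl)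
      have := mul_le_mul_of_nonneg_right hfl hq0
      linarith
  have hbound := tsum_of_norm_bounded (hhead.add (hgq.hasSum.mul_left (c / 2))) hterm
  rw [div_le_iff₀' (half_pos hc)] at hlarge
  linarith [mul_le_mul_of_nonneg_left (Real.le_norm_self (∑' l, g l * q ^ l)) hc.le]

theorem tendsto_tsum_mul_pow_div_tsum_mul_pow (hg : ∀ l, 0 < g l)
    (hsum : ∀ᶠ q in 𝓝[<] (1 : ℝ), Summable fun l ↦ g l * q ^ l)
    (htop : Tendsto (fun q : ℝ ↦ ∑' l, g l * q ^ l) (𝓝[<] 1) atTop)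
    (hfg : Tendsto (fun l ↦ f l / g l) atTop (𝓝 L)) :
    Tendsto (fun q : ℝ ↦ (∑' l, f l * q ^ l) / ∑' l, g l * q ^ l) (𝓝[<] 1) (𝓝 L) := by
  have hfO : f =O[atTop] g :=
    isBigO_of_div_tendsto_nhds (.of_forall fun l hl ↦ absurd hl (hg l).ne') L hfg
  have hsub : (fun l ↦ f l - L * g l) =o[atTop] g := by
    refine (isLittleO_iff_tendsto fun l hl ↦ absurd hl (hg l).ne').2 ?_
    simpa [sub_div, (hg _).ne'] using hfg.sub_const L
  have hdiff := (isLittleO_tsum_mul_pow (fun l ↦ (hg l).le) hsum htop hsub).tendsto_div_nhds_zero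
  rw [← zero_add L]
  refine (hdiff.add_const L).congr' ?_
  filter_upwards [hsum, htop.eventually_gt_atTop 0] with q hgq hpos
  have hfq : Summable fun l ↦ f l * q ^ l :=
    summable_of_isBigO_nat hgq (hfO.mul (isBigO_refl _ _))
  have hsplit : ∑' l, (f l - L * g l) * q ^ l = (∑' l, f l * q ^ l) - L * ∑' l, g l * q ^ l := by
    rw [← tsum_mul_left, ← hfq.tsum_sub (hgq.mul_left L)]
    exact tsum_congr fun l ↦ by ring
  rw [hsplit, sub_div, mul_div_cancel_right₀ _ hpos.ne', sub_add_cancel]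

end AbelianTheorem

section BinomialWeights

variable {f : ℕ → ℝ} {L q : ℝ} {m : ℕ}

lemma choose_add_pos (m l : ℕ) : (0 : ℝ) < (l + m).choose m :=
  mod_cast Nat.choose_pos (Nat.le_add_left m l)

lemma choose_add_succ (m l : ℕ) :
    ((l + (m + 1)).choose (m + 1) : ℝ) = (l + m + 1) / (m + 1) * (l + m).choose m := by
  have h : ((l : ℝ) + m + 1) * (l + m).choose m = (l + (m + 1)).choose (m + 1) * (m + 1) :=
    mod_cast Nat.add_one_mul_choose_eq (l + m) m
  field_simp
  linarith

lemma summable_mul_pow_of_tendsto_div_choose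
    (hf : Tendsto (fun l ↦ f l / (l + m).choose m) atTop (𝓝 L)) (hq : ‖q‖ < 1) :
    Summable fun l ↦ f l * q ^ l :=
  have hfO : f =O[atTop] fun l ↦ ((l + m).choose m : ℝ) :=
    isBigO_of_div_tendsto_nhds (.of_forall fun l hl ↦ absurd hl (choose_add_pos m l).ne') L hf
  summable_of_isBigO_nat (hasSum_choose_mul_geometric_of_norm_lt_one m hq).summable
    (hfO.mul (isBigO_refl _ _))

theorem tendsto_one_sub_pow_mul_tsum
    (hf : Tendsto (fun l ↦ f l / (l + m).choose m) atTop (𝓝 L)) :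
    Tendsto (fun q : ℝ ↦ (1 - q) ^ (m + 1) * ∑' l, f l * q ^ l) (𝓝[<] 1) (𝓝 L) := by
  have hgen : ∀ᶠ q in 𝓝[<] (1 : ℝ),
      HasSum (fun l ↦ ((l + m).choose m : ℝ) * q ^ l) (1 / (1 - q) ^ (m + 1)) := by
    filter_upwards [Ioo_mem_nhdsLT one_pos] with q hq
    exact hasSum_choose_mul_geometric_of_norm_lt_one m
      (by rw [Real.norm_of_nonneg hq.1.le]; exact hq.2)
  have hpole : Tendsto (fun q : ℝ ↦ 1 / (1 - q) ^ (m + 1)) (𝓝[<] 1) atTop := by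
    have hzero : Tendsto (fun q : ℝ ↦ (1 - q) ^ (m + 1)) (𝓝[<] 1) (𝓝[>] 0) := by
      refine tendsto_nhdsWithin_iff.2 ⟨?_, ?_⟩
      · exact (Continuous.tendsto' (by fun_prop) _ _ (by simp)).mono_left nhdsWithin_le_nhds
      · filter_upwards [self_mem_nhdsWithin] with q hq
        have hq1 : (0 : ℝ) < 1 - q := sub_pos.2 hq
        exact pow_pos hq1 _
    exact hzero.inv_tendsto_nhdsGT_zero.congr fun q ↦ (one_div _).symm
  have htop := hpole.congr' (hgen.mono fun q hq ↦ hq.tsum_eq.symm)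
  refine (tendsto_tsum_mul_pow_div_tsum_mul_pow (choose_add_pos m)
    (hgen.mono fun q hq ↦ hq.summable) htop hf).congr' ?_
  filter_upwards [hgen] with q hq
  rw [hq.tsum_eq, div_div_eq_mul_div, div_one, mul_comm]

lemma isEquivalent_choose_add (m : ℕ) :
    (fun l : ℕ ↦ ((l + m).choose m : ℝ)) ~[atTop] fun l ↦ (l : ℝ) ^ m / m ! := by
  have hshift : (fun l : ℕ ↦ ((l + m : ℕ) : ℝ)) ~[atTop] fun l ↦ (l : ℝ) := by
    simp only [Nat.cast_add]
    exact IsEquivalent.refl.add_isLittleO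
      ((isLittleO_const_id_atTop (m : ℝ)).comp_tendsto tendsto_natCast_atTop_atTop)
  exact ((isEquivalent_choose m).comp_tendsto (tendsto_add_atTop_nat m)).trans
    ((hshift.pow m).div .refl)

lemma tendsto_choose_mul_pow_div_choose (k j : ℕ) :
    Tendsto (fun l : ℕ ↦ ((l + k).choose k : ℝ) * (l : ℝ) ^ j / (l + (k + j)).choose (k + j))
      atTop (𝓝 ((k + j)! / k !)) := by
  refine (((isEquivalent_choose_add k).mul .refl).div
    (isEquivalent_choose_add (k + j))).symm.tendsto_nhds (tendsto_const_nhds.congr' ?_)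
  filter_upwards [eventually_ne_atTop 0] with l hl
  simp only [Pi.mul_apply, Pi.div_apply, pow_add]
  field_simp

end BinomialWeights

lemma tsum_comp_succ {M : Type*} [AddCommMonoid M] [TopologicalSpace M] {f : ℕ → M}
    (hf : f 0 = 0) : ∑' l, f (l + 1) = ∑' l, f l :=
  Nat.succ_injective.tsum_eq fun _ hl ↦
    Nat.range_succ ▸ Nat.pos_of_ne_zero fun h ↦ hl (h ▸ hf)

lemma choose_add_two_sub_two (k l : ℕ) :
    (l + (k + 2) - 2).choose l = (l + k).choose k :=
  Nat.choose_symm_add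

lemma exp_neg_two_mul_nat (ρ : ℝ) (l : ℕ) : Real.exp (-2 * ρ * l) = Real.exp (-2 * ρ) ^ l := by
  rw [mul_comm, Real.exp_nat_mul]

lemma exp_neg_two_mul_lt_one {ρ : ℝ} (hρ : 0 < ρ) : Real.exp (-2 * ρ) < 1 :=
  Real.exp_lt_one_iff.2 (by linarith)

lemma one_sub_exp_neg_two_mul_pos {ρ : ℝ} (hρ : 0 < ρ) : 0 < 1 - Real.exp (-2 * ρ) :=
  sub_pos.2 (exp_neg_two_mul_lt_one hρ)

lemma norm_exp_neg_two_mul_lt_one {ρ : ℝ} (hρ : 0 < ρ) : ‖Real.exp (-2 * ρ)‖ < 1 := by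
  rw [Real.norm_of_nonneg (Real.exp_pos _).le]
  exact exp_neg_two_mul_lt_one hρ

lemma tendsto_exp_neg_two_mul :
    Tendsto (fun ρ : ℝ ↦ Real.exp (-2 * ρ)) (𝓝[>] 0) (𝓝[<] 1) := by
  refine tendsto_nhdsWithin_iff.2 ⟨?_, ?_⟩
  · exact (Continuous.tendsto' (by fun_prop) _ _ (by simp)).mono_left nhdsWithin_le_nhds
  · filter_upwards [self_mem_nhdsWithin] with ρ hρ
    exact exp_neg_two_mul_lt_one hρ

lemma tendsto_one_sub_exp_neg_two_mul :
    Tendsto (fun ρ : ℝ ↦ 1 - Real.exp (-2 * ρ)) (𝓝[>] 0) (𝓝 0) := by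
  simpa using (tendsto_exp_neg_two_mul.mono_right nhdsWithin_le_nhds).const_sub 1

lemma hasSum_S (k : ℕ) {j : ℕ} (hj : j ≠ 0) {ρ : ℝ} (hρ : 0 < ρ) :
    HasSum (fun l : ℕ ↦ ((l + k).choose k : ℝ) * (l : ℝ) ^ j * Real.exp (-2 * ρ) ^ l)
      (S (k + 2) j ρ) := by
  have hS : S (k + 2) j ρ =
      ∑' l : ℕ, ((l + k).choose k : ℝ) * (l : ℝ) ^ j * Real.exp (-2 * ρ) ^ l := by
    rw [← tsum_comp_succ (by simp [hj]), S]
    refine tsum_congr fun l ↦ ?_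
    rw [choose_add_two_sub_two, ← exp_neg_two_mul_nat, zpow_natCast, Nat.cast_succ]
  rw [hS]
  exact (summable_mul_pow_of_tendsto_div_choose (tendsto_choose_mul_pow_div_choose k j)
    (norm_exp_neg_two_mul_lt_one hρ)).hasSum

lemma tendsto_one_sub_exp_pow_mul_S (k : ℕ) {j : ℕ} (hj : j ≠ 0) :
    Tendsto (fun ρ ↦ (1 - Real.exp (-2 * ρ)) ^ (k + j + 1) * S (k + 2) j ρ) (𝓝[>] 0)
      (𝓝 ((k + j)! / k !)) := by
  refine ((tendsto_one_sub_pow_mul_tsum (tendsto_choose_mul_pow_div_choose k j)).comp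
    tendsto_exp_neg_two_mul).congr' ?_
  filter_upwards [self_mem_nhdsWithin] with ρ hρ
  rw [Function.comp_apply, (hasSum_S k hj hρ).tsum_eq]

lemma one_sub_exp_pow_mul_A (k : ℕ) {ρ : ℝ} (hρ : 0 < ρ) :
    (1 - Real.exp (-2 * ρ)) ^ (k + 3) * A (k + 2) ρ =
      Real.exp (-2 * ρ) * (k + 3 + (k + 1) * Real.exp (-2 * ρ)) := by
  have hq := norm_exp_neg_two_mul_lt_one hρ
  have hS2 : HasSum _ (S (k + 2) 2 ρ) := hasSum_S k two_ne_zero hρ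
  have hS1 : HasSum _ (S (k + 2) 1 ρ) := hasSum_S k one_ne_zero hρ
  have hA : A (k + 2) ρ = 2 / (k + 1) * S (k + 2) 2 ρ + S (k + 2) 1 ρ := by
    rw [A]; push_cast; ring_nf
  have hx : 1 - Real.exp (-2 * ρ) ≠ 0 := (one_sub_exp_neg_two_mul_pos hρ).ne'
  generalize Real.exp (-2 * ρ) = q at *
  have hcoeff (l : ℕ) : 2 / (k + 1 : ℝ) * ((l + k).choose k * l ^ 2) + (l + k).choose k * l ^ 1 =
      2 * (k + 2) * (l + (k + 2)).choose (k + 2) -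
        (3 * k + 5) * (l + (k + 1)).choose (k + 1) + (k + 1) * (l + k).choose k := by
    rw [choose_add_succ (k + 1), choose_add_succ k]
    push_cast
    field_simp
    ring
  have hw (m : ℕ) := hasSum_choose_mul_geometric_of_norm_lt_one m hq
  have hbasis := (((hw (k + 2)).mul_left (2 * (k + 2 : ℝ))).sub
    ((hw (k + 1)).mul_left (3 * k + 5 : ℝ))).add ((hw k).mul_left (k + 1 : ℝ))
  have hsum := ((hS2.mul_left (2 / (k + 1 : ℝ))).add hS1).unique <|
    hbasis.congr_fun fun l ↦ by linear_combination q ^ l * hcoeff l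
  rw [hA, hsum]
  field_simp
  ring

/-- The coefficients left over in `B` when `√(l(l+1))` is replaced by `l + 1/2`; here `n = k + 2`,
and an index `l = 0`, absent from `B`, is included. -/
noncomputable def remainderCoeff (k l : ℕ) : ℝ :=
  2 * (l + k + 1) / (k + 1) * (l + k).choose k * (√(l * (l + 1)) - (l + 1 / 2))

/-- The power series `∑ remainderCoeff k l * q ^ l`, scaled by `(1 - q) ^ (k + 1)` so that it has a
finite limit as `q → 1`. -/
noncomputable def remainder (k : ℕ) (q : ℝ) : ℝ :=
  (1 - q) ^ (k + 1) * ∑' l, remainderCoeff k l * q ^ l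

lemma tendsto_mul_sqrt_mul_add_one_sub :
    Tendsto (fun x : ℝ ↦ x * (√(x * (x + 1)) - (x + 1 / 2))) atTop (𝓝 (-1 / 8)) := by
  have hcont : ContinuousAt (fun u : ℝ ↦ (-1 / 4) / (√(1 + u) + 1 + u / 2)) 0 :=
    continuousAt_const.div (by fun_prop) (by norm_num)
  have hval : (-1 / 4) / (√(1 + 0) + 1 + 0 / 2) = (-1 / 8 : ℝ) := by
    rw [add_zero, Real.sqrt_one]
    norm_num
  have hlim := hcont.tendsto.comp tendsto_inv_atTop_zero
  rw [hval] at hlim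
  refine hlim.congr' ?_
  filter_upwards [eventually_gt_atTop 0] with x hx
  have hsqrt : √(x * (x + 1)) = x * √(1 + x⁻¹) := by
    rw [show x * (x + 1) = x ^ 2 * (1 + x⁻¹) by field_simp, Real.sqrt_mul (sq_nonneg x),
      Real.sqrt_sq hx.le]
  have hsq : √(1 + x⁻¹) ^ 2 = 1 + x⁻¹ := Real.sq_sqrt (by positivity)
  rw [Function.comp_apply, hsqrt, div_eq_iff (by positivity)]
  calc -1 / 4 = x ^ 2 * (1 + x⁻¹ - (1 + x⁻¹ / 2) ^ 2) := by field_simp; ring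
    _ = x ^ 2 * (√(1 + x⁻¹) ^ 2 - (1 + x⁻¹ / 2) ^ 2) := by rw [hsq]
    _ = x * (x * √(1 + x⁻¹) - (x + 1 / 2)) * (√(1 + x⁻¹) + 1 + x⁻¹ / 2) := by field_simp; ring

lemma tendsto_remainderCoeff_div_choose (k : ℕ) :
    Tendsto (fun l ↦ remainderCoeff k l / (l + k).choose k) atTop (𝓝 (-1 / (4 * (k + 1)))) := by
  have hratio : Tendsto (fun l : ℕ ↦ 1 + ((k : ℝ) + 1) * (l : ℝ)⁻¹) atTop (𝓝 1) := by
    simpa using (tendsto_inv_atTop_nhds_zero_nat.const_mul ((k : ℝ) + 1)).const_add 1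
  have hlim := (hratio.mul (tendsto_mul_sqrt_mul_add_one_sub.comp
    tendsto_natCast_atTop_atTop)).const_mul (2 / ((k : ℝ) + 1))
  rw [show 2 / ((k : ℝ) + 1) * (1 * (-1 / 8)) = -1 / (4 * (k + 1)) by field_simp; norm_num] at hlim
  refine hlim.congr' ?_
  filter_upwards [eventually_ne_atTop 0] with l hl
  have hl' : (l : ℝ) ≠ 0 := mod_cast hl
  have hchoose := (choose_add_pos k l).ne'
  rw [Function.comp_apply, remainderCoeff]
  field_simp
  ring

lemma tendsto_remainder_exp (k : ℕ) :
    Tendsto (fun ρ ↦ remainder k (Real.exp (-2 * ρ))) (𝓝[>] 0) (𝓝 (-1 / (4 * (k + 1)))) :=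
  (tendsto_one_sub_pow_mul_tsum (tendsto_remainderCoeff_div_choose k)).comp
    tendsto_exp_neg_two_mul

lemma B_eq_tsum (k : ℕ) (ρ : ℝ) :
    B (k + 2) ρ = ∑' l : ℕ, 2 * ((l : ℝ) + k + 1) / (k + 1) * (l + k).choose k *
      √(l * (l + 1)) * Real.exp (-2 * ρ) ^ l := by
  rw [← tsum_comp_succ (by simp), B]
  refine tsum_congr fun l ↦ ?_
  rw [choose_add_two_sub_two, ← exp_neg_two_mul_nat]
  push_cast
  ring_nf

lemma one_sub_exp_pow_mul_B (k : ℕ) {ρ : ℝ} (hρ : 0 < ρ) :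
    (1 - Real.exp (-2 * ρ)) ^ (k + 3) * B (k + 2) ρ =
      1 + (2 * k + 3) * Real.exp (-2 * ρ) +
        (1 - Real.exp (-2 * ρ)) ^ 2 * remainder k (Real.exp (-2 * ρ)) := by
  have hq := norm_exp_neg_two_mul_lt_one hρ
  have hx : 1 - Real.exp (-2 * ρ) ≠ 0 := (one_sub_exp_neg_two_mul_pos hρ).ne'
  rw [B_eq_tsum, remainder]
  generalize Real.exp (-2 * ρ) = q at *
  have hcoeff (l : ℕ) : 2 * (l + k + 1) / (k + 1 : ℝ) * (l + k).choose k * (l + 1 / 2) =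
      2 * (k + 2) * (l + (k + 2)).choose (k + 2) - (2 * k + 3) * (l + (k + 1)).choose (k + 1) := by
    rw [choose_add_succ (k + 1), choose_add_succ k]
    push_cast
    field_simp
    ring
  have hw (m : ℕ) := hasSum_choose_mul_geometric_of_norm_lt_one m hq
  have hmain := ((hw (k + 2)).mul_left (2 * (k + 2 : ℝ))).sub
    ((hw (k + 1)).mul_left (2 * k + 3 : ℝ))
  have hrem := (summable_mul_pow_of_tendsto_div_choose
    (tendsto_remainderCoeff_div_choose k) hq).hasSum
  have hsum := (hmain.add hrem).congr_fun (g := fun l : ℕ ↦ 2 * ((l : ℝ) + k + 1) / (k + 1) *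
      (l + k).choose k * √(l * (l + 1)) * q ^ l) fun l ↦ by
    rw [remainderCoeff]
    linear_combination q ^ l * hcoeff l
  rw [hsum.tsum_eq]
  field_simp
  ring

lemma tendsto_one_sub_exp_pow_mul_A (k : ℕ) :
    Tendsto (fun ρ ↦ (1 - Real.exp (-2 * ρ)) ^ (k + 3) * A (k + 2) ρ) (𝓝[>] 0)
      (𝓝 (2 * (k + 2))) := by
  refine Tendsto.congr' (eventually_mem_nhdsWithin.mono fun ρ hρ ↦
    (one_sub_exp_pow_mul_A k hρ).symm) ?_
  have hq := tendsto_exp_neg_two_mul.mono_right nhdsWithin_le_nhds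
  convert hq.mul ((hq.const_mul (k + 1 : ℝ)).const_add (k + 3 : ℝ)) using 2
  ring

lemma tendsto_one_sub_exp_pow_mul_B (k : ℕ) :
    Tendsto (fun ρ ↦ (1 - Real.exp (-2 * ρ)) ^ (k + 3) * B (k + 2) ρ) (𝓝[>] 0)
      (𝓝 (2 * (k + 2))) := by
  have hq := tendsto_exp_neg_two_mul.mono_right nhdsWithin_le_nhds
  have hlim := ((hq.const_mul (2 * k + 3 : ℝ)).const_add 1).add
    ((tendsto_one_sub_exp_neg_two_mul.pow 2).mul (tendsto_remainder_exp k))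
  convert hlim.congr' ?_ using 2
  · ring
  · exact eventually_mem_nhdsWithin.mono fun ρ hρ ↦ (one_sub_exp_pow_mul_B k hρ).symm

lemma tendsto_one_sub_exp_pow_mul_Cf (k : ℕ) :
    Tendsto (fun ρ ↦ (1 - Real.exp (-2 * ρ)) ^ (k + 5) * Cf (k + 2) ρ) (𝓝[>] 0)
      (𝓝 (2 * (k + 2) * (k + 3) * (k + 4))) := by
  have hx := tendsto_one_sub_exp_neg_two_mul
  have hlim := (((tendsto_one_sub_exp_pow_mul_S k four_ne_zero).const_mul (2 / ((k : ℝ) + 1))).add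
    ((hx.mul (tendsto_one_sub_exp_pow_mul_S k three_ne_zero)).const_mul 3)).add
    (((hx.pow 2).mul (tendsto_one_sub_exp_pow_mul_S k two_ne_zero)).const_mul ((k : ℝ) + 1))
  convert hlim.congr fun ρ ↦ ?_ using 2
  · have := k.factorial_ne_zero
    simp only [Nat.factorial_succ]
    push_cast
    field_simp
    ring
  · rw [Cf]
    push_cast
    ring

/-- The variance of the wavelet in the momentum domain. -/
noncomputable def momentumVariance (n : ℕ) (ρ : ℝ) : ℝ :=
  Cf n ρ / A n ρ

/-- The variance of the wavelet in the space domain. -/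
noncomputable def spaceVariance (n : ℕ) (ρ : ℝ) : ℝ :=
  Real.exp (2 * ρ) * A n ρ ^ 2 / B n ρ ^ 2 - 1

theorem tendsto_sq_mul_momentumVariance {n : ℕ} (hn : 2 ≤ n) :
    Tendsto (fun ρ ↦ (1 - Real.exp (-2 * ρ)) ^ 2 * momentumVariance n ρ) (𝓝[>] 0)
      (𝓝 (((n : ℝ) + 1) * (n + 2))) := by
  obtain ⟨k, rfl⟩ := Nat.exists_eq_add_of_le' hn
  have hlim := (tendsto_one_sub_exp_pow_mul_Cf k).div (tendsto_one_sub_exp_pow_mul_A k)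
    (by positivity)
  convert hlim.congr' ?_ using 2
  · push_cast
    field_simp
    ring
  · filter_upwards [self_mem_nhdsWithin] with ρ hρ
    have hx : 1 - Real.exp (-2 * ρ) ≠ 0 := (one_sub_exp_neg_two_mul_pos hρ).ne'
    rw [Pi.div_apply, momentumVariance, show k + 5 = 2 + (k + 3) by ring, pow_add,
      mul_assoc, mul_div_assoc, mul_div_mul_left _ _ (pow_ne_zero _ hx)]

lemma spaceVariance_div_sq_eq (k : ℕ) {ρ : ℝ} (hρ : 0 < ρ) (hB : B (k + 2) ρ ≠ 0) :
    spaceVariance (k + 2) ρ / (1 - Real.exp (-2 * ρ)) ^ 2 =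
      ((k + 1) ^ 2 * Real.exp (-2 * ρ) - 1 -
        2 * remainder k (Real.exp (-2 * ρ)) * (1 + (2 * k + 3) * Real.exp (-2 * ρ)) -
        (1 - Real.exp (-2 * ρ)) ^ 2 * remainder k (Real.exp (-2 * ρ)) ^ 2) /
      ((1 - Real.exp (-2 * ρ)) ^ (k + 3) * B (k + 2) ρ) ^ 2 := by
  have hA := one_sub_exp_pow_mul_A k hρ
  have hBeq := one_sub_exp_pow_mul_B k hρ
  have hx : 1 - Real.exp (-2 * ρ) ≠ 0 := (one_sub_exp_neg_two_mul_pos hρ).ne'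
  have hexp : Real.exp (2 * ρ) = (Real.exp (-2 * ρ))⁻¹ := by rw [← Real.exp_neg]; ring_nf
  have hq : Real.exp (-2 * ρ) ≠ 0 := (Real.exp_pos _).ne'
  rw [spaceVariance, hexp]
  generalize Real.exp (-2 * ρ) = q at *
  generalize remainder k q = R at *
  have hcancel : ((1 - q) ^ (k + 3) * A (k + 2) ρ) ^ 2 - q * ((1 - q) ^ (k + 3) * B (k + 2) ρ) ^ 2 =
      q * (1 - q) ^ 2 * ((k + 1) ^ 2 * q - 1 - 2 * R * (1 + (2 * k + 3) * q) -
        (1 - q) ^ 2 * R ^ 2) := by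
    rw [hA, hBeq]
    ring
  field_simp
  linear_combination hcancel

theorem tendsto_spaceVariance_div_sq {n : ℕ} (hn : 2 ≤ n) :
    Tendsto (fun ρ ↦ spaceVariance n ρ / (1 - Real.exp (-2 * ρ)) ^ 2) (𝓝[>] 0)
      (𝓝 (((n : ℝ) ^ 2 - 3 * n + 3) / (4 * n * (n - 1)))) := by
  obtain ⟨k, rfl⟩ := Nat.exists_eq_add_of_le' hn
  have hq : Tendsto (fun ρ : ℝ ↦ Real.exp (-2 * ρ)) (𝓝[>] 0) (𝓝 1) :=
    tendsto_exp_neg_two_mul.mono_right nhdsWithin_le_nhds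
  have hx := tendsto_one_sub_exp_neg_two_mul
  have hR := tendsto_remainder_exp k
  have hB := tendsto_one_sub_exp_pow_mul_B k
  have hlin := (hq.const_mul (2 * k + 3 : ℝ)).const_add 1
  have hlim := ((((hq.const_mul ((k + 1 : ℝ) ^ 2)).sub_const 1).sub
    ((hR.const_mul 2).mul hlin)).sub ((hx.pow 2).mul (hR.pow 2))).div (hB.pow 2)
    (by positivity)
  convert hlim.congr' ?_ using 2
  · push_cast
    rw [show (k : ℝ) + 2 - 1 = k + 1 by ring]
    field_simp
    ring
  · filter_upwards [self_mem_nhdsWithin, hB.eventually_ne (by positivity)] with ρ hρ hBρ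
    exact (spaceVariance_div_sq_eq k hρ (right_ne_zero_of_mul hBρ)).symm

end AbelPoisson

/-- The limit of the uncertainty product of the Abel-Poisson wavelet as `ρ → 0+`. -/
theorem stmt_16 (n : ℕ) (hn : 2 ≤ n) :
    Tendsto
      (fun ρ : ℝ =>
        Real.sqrt (Real.exp (2 * ρ) * (A n ρ) ^ 2 / (B n ρ) ^ 2 - 1) *
          Real.sqrt (Cf n ρ / A n ρ))
      (nhdsWithin 0 (Set.Ioi 0))
      (nhds ((1 / 2) * Real.sqrt (((n : ℝ) + 1) * ((n : ℝ) + 2) *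
        ((n : ℝ) ^ 2 - 3 * (n : ℝ) + 3) / ((n : ℝ) * ((n : ℝ) - 1))))) := by
  have hlim := (AbelPoisson.tendsto_spaceVariance_div_sq hn).sqrt.mul
    (AbelPoisson.tendsto_sq_mul_momentumVariance hn).sqrt
  have hn1 : (0 : ℝ) < n - 1 := sub_pos.2 (mod_cast hn)
  convert hlim.congr' ?_ using 2
  · rw [← Real.sqrt_mul' _ (by positivity), ← Real.sqrt_sq (one_half_pos (α := ℝ)).le,
      ← Real.sqrt_mul (sq_nonneg _)]
    congr 1
    field_simp
    ring
  · filter_upwards [self_mem_nhdsWithin] with ρ hρ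
    have hx := AbelPoisson.one_sub_exp_neg_two_mul_pos hρ
    rw [Real.sqrt_div' _ (sq_nonneg _), Real.sqrt_mul (sq_nonneg _), Real.sqrt_sq hx.le,
      div_mul_eq_mul_div, mul_left_comm, mul_div_cancel_left₀ _ hx.ne',
      AbelPoisson.spaceVariance, AbelPoisson.momentumVariance]
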